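/- Let R be a commutative ring, m ≥ 0 and n ≥ 1. For all A₁,…,A_{2n} ∈ M_n E^m, every entry of the matrix s_{2n}(A₁,…,A_{2n}) lies in E^m_{≥2} = ⨁_{i=2}^m E^m_i, the sum of the homogeneous components of degree at least 2 of the Grassmann algebra. -/

import Mathlib

open Polynomial in
theorem Matrix.derivative_det {R n : Type*} [CommRing R] [Fintype n] [DecidableEq n]
    (M : Matrix n n R[X]) :
    derivative M.det = (M.adjugate * M.map derivative).trace := by
  have h (i : n) : (M.adjugate * M.map derivative) i i =
      (M.updateCol i fun j => derivative (M j i)).det := by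
    rw [← Matrix.cramer_apply, Matrix.cramer_eq_adjugate_mulVec]
    rfl
  simp only [Matrix.trace, Matrix.diag_apply, h, Matrix.det_apply, map_sum]
  rw [Finset.sum_comm]
  refine Finset.sum_congr rfl fun σ _ => ?_
  rw [← Finset.smul_sum, Units.smul_def, Units.smul_def, derivative_smul, derivative_prod_finset]
  congr 1
  refine Finset.sum_congr rfl fun i _ => ?_
  rw [← Finset.mul_prod_erase _ _ (Finset.mem_univ i), mul_comm]
  congr 1
  · simp
  · refine Finset.prod_congr rfl fun j hj => ?_
    rw [Matrix.updateCol_ne (Finset.ne_of_mem_erase hj)]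

open Polynomial in
theorem Matrix.derivative_charpolyRev_eq_zero {R n : Type*} [CommRing R] [Fintype n]
    [DecidableEq n] (B : Matrix n n R) (hB : ∀ k, (B ^ (k + 1)).trace = 0) :
    derivative B.charpolyRev = 0 := by
  set D : Matrix n n R[X] := B.map C with hD
  set N : Matrix n n R[X] := 1 - (X : R[X]) • D with hN
  have hmap : N.map derivative = -D := by
    ext1 i j
    by_cases h : i = j <;> simp [hN, hD, h, derivative_mul]
  have hDtr (k : ℕ) : (D ^ (k + 1)).trace = 0 := by
    have h : D ^ (k + 1) = (C : R →+* R[X]).mapMatrix (B ^ (k + 1)) := by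
      rw [map_pow]; rfl
    rw [h, RingHom.mapMatrix_apply, ← AddMonoidHom.map_trace, hB, map_zero]
  have key (K : ℕ) : (N.adjugate * D).trace = X ^ K * (N.adjugate * D ^ K * D).trace := by
    have h1 : N * (∑ k ∈ Finset.range K, ((X : R[X]) • D) ^ k) + ((X : R[X]) • D) ^ K = 1 := by
      rw [hN, mul_neg_geom_sum, sub_add_cancel]
    have h2 : N.adjugate = N.det • (∑ k ∈ Finset.range K, ((X : R[X]) • D) ^ k) +
        N.adjugate * ((X : R[X]) • D) ^ K := by
      conv_lhs => rw [← mul_one N.adjugate, ← h1, mul_add, ← mul_assoc, Matrix.adjugate_mul,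
        smul_mul_assoc, one_mul]
    conv_lhs => rw [h2]
    have h3 (k : ℕ) : (((X : R[X]) • D) ^ k * D).trace = 0 := by
      rw [_root_.smul_pow, smul_mul_assoc, Matrix.trace_smul, ← pow_succ, hDtr, smul_zero]
    rw [add_mul, Matrix.trace_add, smul_mul_assoc, Matrix.trace_smul, Finset.sum_mul,
      Matrix.trace_sum, Finset.sum_eq_zero fun k _ => h3 k, smul_zero, zero_add, _root_.smul_pow,
      mul_smul_comm, smul_mul_assoc, Matrix.trace_smul, smul_eq_mul]
  have h0 : (N.adjugate * D).trace = 0 := by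
    ext d
    rw [key (d + 1), coeff_X_pow_mul', if_neg (by lia), coeff_zero]
  rw [Matrix.charpolyRev, Matrix.derivative_det, hmap, mul_neg, Matrix.trace_neg, h0, neg_zero]

open Polynomial in
theorem Matrix.pow_card_eq_zero_of_trace_pow_eq_zero {R n : Type*} [CommRing R]
    [IsAddTorsionFree R] [Fintype n] [DecidableEq n] (B : Matrix n n R)
    (hB : ∀ k, (B ^ (k + 1)).trace = 0) : B ^ Fintype.card n = 0 := by
  nontriviality R
  have h1 : B.charpolyRev = 1 := by
    rw [eq_C_of_derivative_eq_zero (B.derivative_charpolyRev_eq_zero hB), coeff_zero_eq_eval_zero,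
      B.eval_charpolyRev, C_1]
  have h2 : B.charpoly = X ^ Fintype.card n := by
    have := B.reverse_charpoly
    rw [h1, reverse, B.charpoly_natDegree_eq_dim] at this
    rw [← reflect_reflect (N := Fintype.card n) (p := B.charpoly), this, reflect_one]
  simpa [h2] using B.aeval_self_charpoly

theorem Matrix.trace_mul_eq_neg_of_anticommute {S n : Type*} [Ring S] [Fintype n]
    (X Y : Matrix n n S) (h : ∀ i j k l, X i j * Y k l = -(Y k l * X i j)) :
    (X * Y).trace = -(Y * X).trace := by
  simp only [Matrix.trace, Matrix.diag_apply, Matrix.mul_apply, h, Finset.sum_neg_distrib]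
  rw [Finset.sum_comm]

theorem Matrix.list_prod_ofFn_map_smul {K E n : Type*} [CommSemiring K] [Semiring E] [Algebra K E]
    [Fintype n] [DecidableEq n] {k : ℕ} (A : Fin k → Matrix n n K) (v : Fin k → E) :
    (List.ofFn fun i => (A i).map (· • v i)).prod =
      (List.ofFn A).prod.map (· • (List.ofFn v).prod) := by
  induction k with
  | zero =>
    ext i j
    by_cases h : i = j <;> simp [h]
  | succ k ih =>
    rw [List.ofFn_succ, List.prod_cons, ih, List.ofFn_succ, List.ofFn_succ, List.prod_cons,
      List.prod_cons]
    ext i j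
    simp only [Matrix.mul_apply, Matrix.map_apply, Finset.sum_smul, smul_mul_smul_comm]

/-- The standard polynomial of degree `k` evaluated at `x₁, …, x_k`. -/
def standardPolynomial {S : Type*} [Ring S] {k : ℕ} (x : Fin k → S) : S :=
  ∑ π : Equiv.Perm (Fin k), (Equiv.Perm.sign π : ℤ) • (List.ofFn fun i => x (π i)).prod

theorem map_standardPolynomial {S T : Type*} [Ring S] [Ring T] (φ : S →+* T) {k : ℕ}
    (x : Fin k → S) : φ (standardPolynomial x) = standardPolynomial (φ ∘ x) := by
  simp only [standardPolynomial, map_sum, map_zsmul, map_list_prod, List.map_ofFn,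
    Function.comp_def]

namespace ExteriorAlgebra

open CliffordAlgebra (evenOdd)

variable {K M : Type*} [CommRing K] [AddCommGroup M] [Module K M]

theorem mul_comm_of_mem_evenOdd_zero {x : ExteriorAlgebra K M}
    (hx : x ∈ evenOdd (0 : QuadraticForm K M) 0) (y : ExteriorAlgebra K M) : x * y = y * x := by
  have key (j : ZMod 2) (y : ExteriorAlgebra K M) (hy : y ∈ evenOdd (0 : QuadraticForm K M) j) :
      x * y = y * x := by
    have := CliffordAlgebra.commute_map_mul_map_of_isOrtho_of_mem_evenOdd_zero_left
      (QuadraticMap.Isometry.id (0 : QuadraticForm K M))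
      (QuadraticMap.Isometry.id (0 : QuadraticForm K M))
      (fun a b => by simp [QuadraticMap.isOrtho_def]) x y hx hy
    simpa [CliffordAlgebra.map_id] using this.eq
  induction y using DirectSum.Decomposition.inductionOn (evenOdd (0 : QuadraticForm K M)) with
  | zero => simp
  | homogeneous y => exact key _ _ y.2
  | add a b ha hb => rw [mul_add, add_mul, ha, hb]

theorem mul_eq_neg_of_mem_evenOdd_one {x y : ExteriorAlgebra K M}
    (hx : x ∈ evenOdd (0 : QuadraticForm K M) 1)
    (hy : y ∈ evenOdd (0 : QuadraticForm K M) 1) : x * y = -(y * x) := by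
  have := CliffordAlgebra.map_mul_map_eq_neg_of_isOrtho_of_mem_evenOdd_one
    (QuadraticMap.Isometry.id (0 : QuadraticForm K M))
    (QuadraticMap.Isometry.id (0 : QuadraticForm K M))
    (fun a b => by simp [QuadraticMap.isOrtho_def]) x y hx hy
  simpa [CliffordAlgebra.map_id] using this

theorem matrix_pow_apply_mem_evenOdd {n : Type*} [Fintype n] [DecidableEq n]
    {X : Matrix n n (ExteriorAlgebra K M)}
    (hX : ∀ i j, X i j ∈ evenOdd (0 : QuadraticForm K M) 1) (k : ℕ) (i j : n) :
    (X ^ k) i j ∈ evenOdd (0 : QuadraticForm K M) (k : ZMod 2) := by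
  induction k generalizing i j with
  | zero =>
    rw [pow_zero, Nat.cast_zero, Matrix.one_apply]
    split_ifs
    · exact SetLike.GradedOne.one_mem
    · exact zero_mem _
  | succ k ih =>
    rw [pow_succ, Matrix.mul_apply, Nat.cast_succ]
    exact sum_mem fun l _ => SetLike.GradedMul.mul_mem (ih i l) (hX l j)

theorem matrix_pow_two_mul_card_eq_zero [Algebra ℚ K] {n : Type*} [Fintype n] [DecidableEq n]
    {X : Matrix n n (ExteriorAlgebra K M)}
    (hX : ∀ i j, X i j ∈ evenOdd (0 : QuadraticForm K M) 1) :
    X ^ (2 * Fintype.card n) = 0 := by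
  have hE : IsAddTorsionFree (ExteriorAlgebra K M) :=
    let : Module ℚ (ExteriorAlgebra K M) := Module.compHom _ (algebraMap ℚ K)
    .of_module_rat _
  let Z := Subalgebra.center K (ExteriorAlgebra K M)
  have hZ : IsAddTorsionFree Z :=
    Function.Injective.isAddTorsionFree Z.val.toAddMonoidHom Subtype.val_injective
  have hmem (i j : n) : (X ^ 2) i j ∈ Z := by
    have h := matrix_pow_apply_mem_evenOdd hX 2 i j
    exact Subalgebra.mem_center_iff.2 fun y => (mul_comm_of_mem_evenOdd_zero h y).symm
  let B : Matrix n n Z := .of fun i j => ⟨(X ^ 2) i j, hmem i j⟩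
  have hB (k : ℕ) : (Z.val : Z →+* ExteriorAlgebra K M).mapMatrix (B ^ k) = X ^ (2 * k) := by
    rw [map_pow, pow_mul]
    rfl
  have htr (k : ℕ) : (B ^ (k + 1)).trace = 0 := by
    apply Subtype.val_injective
    have h1 : ((B ^ (k + 1)).trace : ExteriorAlgebra K M) = (X ^ (2 * (k + 1))).trace := by
      rw [← hB, RingHom.mapMatrix_apply, ← AddMonoidHom.map_trace]
      rfl
    have h2 : (X ^ (2 * k + 1) * X).trace = -(X * X ^ (2 * k + 1)).trace := by
      refine Matrix.trace_mul_eq_neg_of_anticommute _ _ fun i j k' l => ?_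
      refine mul_eq_neg_of_mem_evenOdd_one ?_ (hX k' l)
      have h := matrix_pow_apply_mem_evenOdd hX (2 * k + 1) i j
      have h2 : (2 : ZMod 2) = 0 := rfl
      simpa [h2] using h
    rw [← pow_succ, ← pow_succ', self_eq_neg] at h2
    rw [h1]
    exact h2
  rw [← hB, B.pow_card_eq_zero_of_trace_pow_eq_zero htr, map_zero]

end ExteriorAlgebra

theorem Matrix.detRowAlternating_single_perm {K : Type*} [CommRing K] {N : ℕ}
    (π : Equiv.Perm (Fin N)) :
    (Matrix.detRowAlternating fun i => (Pi.single (π i) 1 : Fin N → K)) =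
      ((Equiv.Perm.sign π : ℤ) : K) := by
  have h := (Matrix.detRowAlternating (R := K) (n := Fin N)).map_perm
    (fun i => Pi.single i 1) π
  have h1 : Matrix.detRowAlternating (fun i => (Pi.single i 1 : Fin N → K)) = 1 := by
    rw [← Matrix.det_one (n := Fin N) (R := K)]
    congr 1
    ext i j
    simp [Matrix.one_apply, Pi.single_apply, eq_comm]
  rw [h1] at h
  refine h.trans ?_
  rw [Units.smul_def, zsmul_eq_mul, mul_one]

theorem Matrix.standardPolynomial_eq_zero_of_algebra_rat {K n : Type*} [CommRing K] [Algebra ℚ K]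
    [Fintype n] [DecidableEq n] {N : ℕ} (hN : N = 2 * Fintype.card n)
    (A : Fin N → Matrix n n K) :
    standardPolynomial A = 0 := by
  let v (i : Fin N) : ExteriorAlgebra K (Fin N → K) := ExteriorAlgebra.ι K (Pi.single i 1)
  let X (i : Fin N) : Matrix n n (ExteriorAlgebra K (Fin N → K)) := (A i).map (· • v i)
  have hX : (∑ i, X i) ^ N = 0 := by
    refine (congrArg _ hN).trans <|
      ExteriorAlgebra.matrix_pow_two_mul_card_eq_zero fun i j => ?_
    rw [Matrix.sum_apply]
    exact sum_mem fun k _ => Submodule.smul_mem _ _ (CliffordAlgebra.ι_mem_evenOdd_one _ _)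
  have hexp : (∑ i, X i) ^ N = ∑ f : Fin N → Fin N,
      (List.ofFn fun i => A (f i)).prod.map (· • (List.ofFn fun i => v (f i)).prod) := by
    have h := (MultilinearMap.mkPiAlgebraFin K N
      (Matrix n n (ExteriorAlgebra K (Fin N → K)))).map_sum fun _ j => X j
    simp only [MultilinearMap.mkPiAlgebraFin_apply, List.ofFn_const, List.prod_replicate] at h
    rw [h]
    exact Finset.sum_congr rfl fun f _ => Matrix.list_prod_ofFn_map_smul _ _
  let φ : ExteriorAlgebra K (Fin N → K) →ₗ[K] K := ExteriorAlgebra.liftAlternating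
    (Function.update (fun _ => 0) N Matrix.detRowAlternating)
  have hφ (f : Fin N → Fin N) : φ (List.ofFn fun i => v (f i)).prod =
      Matrix.detRowAlternating fun i => (Pi.single (f i) 1 : Fin N → K) := by
    rw [← ExteriorAlgebra.ιMulti_apply, ExteriorAlgebra.liftAlternating_apply_ιMulti,
      Function.update_self]
  ext p q
  have hpq : φ (((∑ i, X i) ^ N) p q) = 0 := by rw [hX, Matrix.zero_apply, map_zero]
  rw [hexp, Matrix.sum_apply, map_sum] at hpq
  simp only [Matrix.map_apply, map_smul, hφ] at hpq
  rw [Matrix.zero_apply, ← hpq, standardPolynomial, Matrix.sum_apply]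
  refine Fintype.sum_of_injective (fun π : Equiv.Perm (Fin N) => (π : Fin N → Fin N))
    DFunLike.coe_injective _ _ (fun f hf => ?_) fun π => ?_
  · rw [AlternatingMap.map_eq_zero_of_not_injective, smul_zero]
    intro hinj
    refine hf ⟨Equiv.ofBijective f (Finite.injective_iff_bijective.1 fun a b hab => ?_), rfl⟩
    exact hinj (by simp [hab])
  · rw [Matrix.detRowAlternating_single_perm, Matrix.smul_apply, zsmul_eq_mul, smul_eq_mul,
      mul_comm]

/-- The **Amitsur–Levitzki theorem**. -/
theorem Matrix.standardPolynomial_eq_zero {R n : Type*} [CommRing R] [Fintype n] [DecidableEq n]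
    {N : ℕ} (hN : N = 2 * Fintype.card n) (A : Fin N → Matrix n n R) :
    standardPolynomial A = 0 := by
  let σ := Fin N × n × n
  let G (i) : Matrix n n (MvPolynomial σ ℤ) := .of fun p q => .X (i, p, q)
  let ψ : MvPolynomial σ ℤ →+* R := (MvPolynomial.aeval fun x => A x.1 x.2.1 x.2.2).toRingHom
  let χ : MvPolynomial σ ℤ →+* MvPolynomial σ ℚ := MvPolynomial.map (Int.castRingHom ℚ)
  have hχ : Function.Injective (χ.mapMatrix (m := n)) :=
    Matrix.map_injective (MvPolynomial.map_injective _ Int.cast_injective)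
  have hG : standardPolynomial G = 0 := by
    apply hχ
    rw [map_standardPolynomial, map_zero]
    exact Matrix.standardPolynomial_eq_zero_of_algebra_rat hN _
  have hA : ψ.mapMatrix ∘ G = A := by
    ext i p q
    simp [ψ, G]
  rw [← hA, ← map_standardPolynomial, hG, map_zero]

namespace ExteriorAlgebra

theorem exteriorPower_eq_bot_of_lt {R : Type*} [CommRing R] {m i : ℕ} (h : m < i) :
    ⋀[R]^i (Fin m → R) = ⊥ := by
  have h0 : ιMulti R i (M := Fin m → R) = 0 :=
    (Pi.basisFun R (Fin m)).ext_alternating fun v hv => by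
      have := Fintype.card_le_of_injective v hv
      simp only [Fintype.card_fin] at this
      lia
  rw [← ιMulti_span_fixedDegree, h0]
  simp

theorem toTrivSqZeroExt_eq_zero_of_mem {R M : Type*} [CommRing R] [AddCommGroup M] [Module R M]
    [Module Rᵐᵒᵖ M] [IsCentralScalar R M] {i : ℕ} (hi : 2 ≤ i) {x : ExteriorAlgebra R M}
    (hx : x ∈ ⋀[R]^i M) : toTrivSqZeroExt x = 0 := by
  rw [← ιMulti_span_fixedDegree] at hx
  induction hx using Submodule.span_induction with
  | zero => exact map_zero _
  | add a b _ _ ha hb => rw [map_add, ha, hb, add_zero]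
  | smul r a _ ha => rw [map_smul, ha, smul_zero]
  | mem a ha =>
    obtain ⟨v, rfl⟩ := ha
    obtain ⟨k, rfl⟩ := Nat.exists_eq_add_of_le' hi
    rw [ιMulti_apply, List.ofFn_succ, List.ofFn_succ, List.prod_cons, List.prod_cons, map_mul,
      map_mul, toTrivSqZeroExt_ι, toTrivSqZeroExt_ι, ← mul_assoc, TrivSqZeroExt.inr_mul_inr,
      zero_mul]

theorem mem_iSup_Icc_of_toTrivSqZeroExt_eq_zero {R : Type*} [CommRing R] {m : ℕ}
    {x : ExteriorAlgebra R (Fin m → R)} (hx : toTrivSqZeroExt x = 0) :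
    x ∈ ⨆ i ∈ Finset.Icc 2 m, ⋀[R]^i (Fin m → R) := by
  let P : Submodule R (ExteriorAlgebra R (Fin m → R)) :=
    ⨆ i ∈ Finset.Icc 2 m, ⋀[R]^i (Fin m → R)
  have hP (i : ℕ) (hi : 2 ≤ i) : ⋀[R]^i (Fin m → R) ≤ P := by
    by_cases him : i ≤ m
    · exact le_iSup₂_of_le i (Finset.mem_Icc.2 ⟨hi, him⟩) le_rfl
    · rw [exteriorPower_eq_bot_of_lt (not_le.1 him)]
      exact bot_le
  have hdec (y : ExteriorAlgebra R (Fin m → R)) :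
      ∃ a b, ∃ c ∈ P, toTrivSqZeroExt c = 0 ∧ y = algebraMap R _ a + ι R b + c := by
    induction y using DirectSum.Decomposition.inductionOn fun i : ℕ => ⋀[R]^i (Fin m → R) with
    | zero => exact ⟨0, 0, 0, zero_mem _, by simp, by simp⟩
    | @homogeneous i y =>
      obtain ⟨y, hy⟩ := y
      match i with
      | 0 =>
        rw [exteriorPower, pow_zero] at hy
        obtain ⟨r, rfl⟩ := Submodule.mem_one.1 hy
        exact ⟨r, 0, 0, zero_mem _, by simp, by simp⟩
      | 1 =>
        rw [exteriorPower, pow_one] at hy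
        obtain ⟨b, rfl⟩ := hy
        exact ⟨0, b, 0, zero_mem _, by simp, by simp⟩
      | i + 2 =>
        exact ⟨0, 0, y, hP _ (by lia) hy, toTrivSqZeroExt_eq_zero_of_mem (by lia) hy, by simp⟩
    | add y z hy hz =>
      obtain ⟨a, b, c, hc, hc0, rfl⟩ := hy
      obtain ⟨a', b', c', hc', hc0', rfl⟩ := hz
      exact ⟨a + a', b + b', c + c', add_mem hc hc', by rw [map_add, hc0, hc0', add_zero],
        by simp only [map_add]; abel⟩
  obtain ⟨a, b, c, hc, hc0, rfl⟩ := hdec x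
  rw [map_add, map_add, hc0, add_zero, toTrivSqZeroExt_ι, AlgHom.commutes,
    TrivSqZeroExt.algebraMap_eq_inl] at hx
  have ha : a = 0 := by simpa using congrArg TrivSqZeroExt.fst hx
  have hb : b = 0 := by simpa using congrArg TrivSqZeroExt.snd hx
  rwa [ha, hb, map_zero, map_zero, zero_add, zero_add]

end ExteriorAlgebra


/-- For matrices `A₁, …, A_{2n}` over the Grassmann algebra of rank `m`, every entry of
`s_{2n}(A₁, …, A_{2n})` lies in `E^m_{≥2} = ⨁_{i=2}^m E^m_i`, the sum of the homogeneous
components of degree at least `2`. -/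
theorem grassmann_matrix_standard_polynomial_entries_degree_ge_two
    (R : Type*) [CommRing R] (m n : ℕ) (hn : 1 ≤ n)
    (A : Fin (2 * n) → Matrix (Fin n) (Fin n) (ExteriorAlgebra R (Fin m → R)))
    (p q : Fin n) :
    (∑ π : Equiv.Perm (Fin (2 * n)),
        (Equiv.Perm.sign π : ℤ) • (List.ofFn fun i => A (π i)).prod) p q ∈
      ⨆ i ∈ Finset.Icc 2 m, (⋀[R]^i (Fin m → R)) := by
  change standardPolynomial A p q ∈ _
  apply ExteriorAlgebra.mem_iSup_Icc_of_toTrivSqZeroExt_eq_zero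
  let φ := (ExteriorAlgebra.toTrivSqZeroExt (R := R) (M := Fin m → R)).toRingHom
  have h : φ.mapMatrix (standardPolynomial A) = 0 :=
    (map_standardPolynomial φ.mapMatrix A).trans (Matrix.standardPolynomial_eq_zero (by simp) _)
  exact congrFun₂ h p q
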